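/- Let d > 0 and b ∈ ℝ with b ≠ 0. There exists a constant C ≥ 1, depending only on d and b, such that the following holds for all t ≥ 0 and η ∈ (0,1]: if w(·,s), z(·,s) ∈ W^{1,1}_1(ℝ,ℂ) for each s ∈ [0,t] with s ↦ w(·,s), z(·,s) measurable, and for all s ∈ [0,t] both w and z satisfy ‖w(·,s)‖_{L¹}, ‖z(·,s)‖_{L¹} ≤ η (1+s)^{−1/2}; ‖|·| w(·,s)‖_{L¹}, ‖|·| z(·,s)‖_{L¹} ≤ η (1+s)^{−1}; ‖∂_k w(·,s)‖_{L¹}, ‖∂_k z(·,s)‖_{L¹} ≤ η; and ‖|·| ∂_k w(·,s)‖_{L¹}, ‖|·| ∂_k z(·,s)‖_{L¹} ≤ η ln(2+s) (1+s)^{−1/2}; then for a ∈ {0,1}: ∫_ℝ |k|^a | ∫_0^t ∫_ℝ e^{−d k² (t−s) + i b ξ s} w(k−ξ, s) · ξ z(ξ, s) dξ ds | dk ≤ C η² (1+t)^{−(1+a)/2}. -/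

import Mathlib

open MeasureTheory Real

noncomputable section

/-- `v'` is the weak derivative of `v : ℝ → ℂ`. -/
def HasWeakDeriv (v v' : ℝ → ℂ) : Prop :=
  LocallyIntegrable v volume ∧ LocallyIntegrable v' volume ∧
    ∀ φ : ℝ → ℝ, ContDiff ℝ (⊤ : ℕ∞) φ → HasCompactSupport φ →
      ∫ k, Complex.ofReal (deriv φ k) * v k = -∫ k, Complex.ofReal (φ k) * v' k

/-- `e^{x + iy}` for real `x, y`. -/
def expc (x y : ℝ) : ℂ := Complex.exp (Complex.ofReal x + Complex.ofReal y * Complex.I)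

/-- A moving average of a smooth compactly supported function is again a test function, and its
derivative is a difference of translates. -/
lemma movingAverage_testFunction {φ : ℝ → ℝ} (hφ : ContDiff ℝ (⊤ : ℕ∞) φ)
    (hc : HasCompactSupport φ) {h : ℝ} (hh : 0 ≤ h) :
    ContDiff ℝ (⊤ : ℕ∞) (fun x => ∫ τ in (0 : ℝ)..h, φ (x - τ)) ∧
      HasCompactSupport (fun x => ∫ τ in (0 : ℝ)..h, φ (x - τ)) ∧
      ∀ x, deriv (fun x => ∫ τ in (0 : ℝ)..h, φ (x - τ)) x = φ x - φ (x - h) := by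
  have hcont := hφ.continuous
  have key : (fun x => ∫ τ in (0 : ℝ)..h, φ (x - τ)) =
      fun x => (∫ y in (0 : ℝ)..x, φ y) - ∫ y in (0 : ℝ)..(x - h), φ y := by
    funext x
    rw [intervalIntegral.integral_comp_sub_left, sub_zero,
      intervalIntegral.integral_interval_sub_left] <;>
      exact hcont.intervalIntegrable _ _
  have hd : ∀ x, HasDerivAt (fun x => ∫ τ in (0 : ℝ)..h, φ (x - τ)) (φ x - φ (x - h)) x := by
    intro x
    rw [key]
    have hP : ∀ y, HasDerivAt (fun u => ∫ y in (0 : ℝ)..u, φ y) (φ y) y := fun y =>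
      intervalIntegral.integral_hasDerivAt_right (hcont.intervalIntegrable _ _)
        hcont.aestronglyMeasurable.stronglyMeasurableAtFilter hcont.continuousAt
    exact (hP x).sub (HasDerivAt.comp_sub_const x h (hP (x - h)))
  have hderiv : ∀ x, deriv (fun x => ∫ τ in (0 : ℝ)..h, φ (x - τ)) x = φ x - φ (x - h) :=
    fun x => (hd x).deriv
  refine ⟨?_, ?_, hderiv⟩
  · rw [contDiff_infty_iff_deriv]
    refine ⟨fun x => (hd x).differentiableAt, ?_⟩
    rw [funext hderiv]
    fun_prop
  · refine HasCompactSupport.intro (hc.isCompact.add (isCompact_Icc (a := 0) (b := h))) ?_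
    intro x hx
    refine intervalIntegral.integral_zero_ae (Filter.Eventually.of_forall fun τ hτ => ?_)
    rw [Set.uIoc_of_le hh] at hτ
    by_contra hne
    exact hx ⟨x - τ, subset_tsupport _ hne, τ, ⟨hτ.1.le, hτ.2⟩, by simp⟩

/-- A function with integrable weak derivative satisfies the fundamental theorem of calculus
for each fixed increment, almost everywhere. -/
lemma HasWeakDeriv.translate_sub_ae_eq {v v' : ℝ → ℂ} (hv : HasWeakDeriv v v')
    (hi : Integrable v) (hi' : Integrable v') (hm' : Measurable v') {h : ℝ} (hh : 0 ≤ h) :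
    ∀ᵐ x, v (x + h) - v x = ∫ τ in (0 : ℝ)..h, v' (x + τ) := by
  have hfin : IsFiniteMeasure (volume.restrict (Set.uIoc 0 h)) := by
    rw [Set.uIoc_of_le hh]; infer_instance
  -- joint integrability of the translates
  have hshift : Integrable (Function.uncurry fun τ x : ℝ => v' (x + τ))
      ((volume.restrict (Set.uIoc 0 h)).prod volume) := by
    have hmeas : Measurable (Function.uncurry fun τ x : ℝ => v' (x + τ)) := by
      unfold Function.uncurry; fun_prop
    rw [integrable_prod_iff hmeas.aestronglyMeasurable]
    refine ⟨Filter.Eventually.of_forall fun τ => hi'.comp_add_right τ, ?_⟩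
    have : ∀ τ : ℝ, ∫ x, ‖v' (x + τ)‖ = ∫ x, ‖v' x‖ := fun τ =>
      integral_add_right_eq_self (fun x => ‖v' x‖) τ
    simp only [Function.uncurry, this]
    exact integrable_const _
  have hF : Integrable (fun x => ∫ τ in (0 : ℝ)..h, v' (x + τ)) := by
    have := hshift.integral_prod_right
    simpa only [intervalIntegral.integral_of_le hh, Set.uIoc_of_le hh, Function.uncurry] using this
  have hD : Integrable (fun x => v (x + h) - v x) := (hi.comp_add_right h).sub hi
  have h0 := ae_eq_zero_of_integral_contDiff_smul_eq_zero (hD.sub hF).locallyIntegrable ?_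
  · filter_upwards [h0] with x hx
    exact sub_eq_zero.mp hx
  intro φ hφ hc
  obtain ⟨B, hB⟩ := hc.exists_bound_of_continuous hφ.continuous
  have hφm : Measurable φ := hφ.continuous.measurable
  have hmul : ∀ {u : ℝ → ℂ}, Integrable u → ∀ c : ℝ,
      Integrable (fun x => Complex.ofReal (φ (x - c)) * u x) := fun hu c =>
    hu.bdd_mul (c := B) (by fun_prop) (Filter.Eventually.of_forall fun x => by simpa using hB _)
  have hmul0 : ∀ {u : ℝ → ℂ}, Integrable u → Integrable (fun x => Complex.ofReal (φ x) * u x) :=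
    fun hu => by simpa using hmul hu 0
  obtain ⟨h1, h2, h3⟩ := movingAverage_testFunction hφ hc hh
  have hw := hv.2.2 _ h1 h2
  simp only [h3, Pi.sub_apply, Complex.real_smul, mul_sub] at hw ⊢
  have hsub : Integrable (fun x => (φ x : ℂ) * v (x + h) - (φ x : ℂ) * v x) :=
    (hmul0 (hi.comp_add_right h)).sub (hmul0 hi)
  rw [integral_sub hsub (hmul0 hF),
    integral_sub (hmul0 (hi.comp_add_right h)) (hmul0 hi)]
  have e1 : ∫ x, (φ x : ℂ) * v (x + h) = ∫ x, (φ (x - h) : ℂ) * v x := by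
    rw [← integral_add_right_eq_self (fun x => (φ (x - h) : ℂ) * v x) h]
    simp
  have e2 : ∫ x, ((φ x - φ (x - h) : ℝ) : ℂ) * v x =
      (∫ x, (φ x : ℂ) * v x) - ∫ x, (φ (x - h) : ℂ) * v x := by
    rw [← integral_sub (hmul0 hi) (hmul hi h)]
    simp [sub_mul]
  have e3 : ∫ x, ((∫ τ in (0 : ℝ)..h, φ (x - τ) : ℝ) : ℂ) * v' x =
      ∫ x, (φ x : ℂ) * ∫ τ in (0 : ℝ)..h, v' (x + τ) := by
    have i1 : Integrable (Function.uncurry fun τ x : ℝ => (φ (x - τ) : ℂ) * v' x)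
        ((volume.restrict (Set.uIoc 0 h)).prod volume) := by
      refine Integrable.bdd_mul (c := B) (hi'.comp_snd _) ?_ ?_
      · fun_prop
      · exact Filter.Eventually.of_forall fun x => by simpa using hB _
    have i2 : Integrable (Function.uncurry fun τ x : ℝ => (φ x : ℂ) * v' (x + τ))
        ((volume.restrict (Set.uIoc 0 h)).prod volume) := by
      refine Integrable.bdd_mul (c := B) hshift ?_ ?_
      · fun_prop
      · exact Filter.Eventually.of_forall fun x => by simpa using hB _
    calc ∫ x, ((∫ τ in (0 : ℝ)..h, φ (x - τ) : ℝ) : ℂ) * v' x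
        = ∫ x, ∫ τ in (0 : ℝ)..h, (φ (x - τ) : ℂ) * v' x := by
          simp only [intervalIntegral.integral_mul_const, intervalIntegral.integral_ofReal]
      _ = ∫ τ in (0 : ℝ)..h, ∫ x, (φ (x - τ) : ℂ) * v' x :=
          (intervalIntegral_integral_swap i1).symm
      _ = ∫ τ in (0 : ℝ)..h, ∫ x, (φ x : ℂ) * v' (x + τ) := by
          congr 1; funext τ
          rw [← integral_add_right_eq_self (fun x => (φ (x - τ) : ℂ) * v' x) τ]
          simp
      _ = ∫ x, ∫ τ in (0 : ℝ)..h, (φ x : ℂ) * v' (x + τ) := intervalIntegral_integral_swap i2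
      _ = _ := by simp only [intervalIntegral.integral_const_mul]
  rw [e1, ← e3]
  have := e2.symm.trans hw
  linear_combination -this

/-- The translation modulus of continuity in `L¹` is controlled by the weak derivative. -/
lemma HasWeakDeriv.lintegral_translate_sub_le {v v' : ℝ → ℂ} (hv : HasWeakDeriv v v')
    (hi : Integrable v) (hi' : Integrable v') (hm' : Measurable v') {h : ℝ} (hh : 0 ≤ h) :
    ∫⁻ x, ‖v (x + h) - v x‖ₑ ≤ ENNReal.ofReal h * ∫⁻ x, ‖v' x‖ₑ := by
  calc ∫⁻ x, ‖v (x + h) - v x‖ₑ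
      ≤ ∫⁻ x, ∫⁻ τ in Set.Ioc 0 h, ‖v' (x + τ)‖ₑ := by
        refine lintegral_mono_ae ?_
        filter_upwards [hv.translate_sub_ae_eq hi hi' hm' hh] with x hx
        rw [hx, intervalIntegral.integral_of_le hh]
        exact enorm_integral_le_lintegral_enorm _
    _ = ∫⁻ τ in Set.Ioc 0 h, ∫⁻ x, ‖v' (x + τ)‖ₑ :=
        lintegral_lintegral_swap (by unfold Function.uncurry; fun_prop)
    _ = ENNReal.ofReal h * ∫⁻ x, ‖v' x‖ₑ := by
        simp_rw [lintegral_add_right_eq_self (fun x => ‖v' x‖ₑ)]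
        simp [mul_comm]

/-- An integrable function with integrable weak derivative is essentially bounded by the `L¹`
norm of the derivative. -/
lemma HasWeakDeriv.ae_enorm_le {v v' : ℝ → ℂ} (hv : HasWeakDeriv v v')
    (hi : Integrable v) (hi' : Integrable v') (hm : Measurable v) (hm' : Measurable v') :
    ∀ᵐ x, ‖v x‖ₑ ≤ ∫⁻ y, ‖v' y‖ₑ := by
  set K := ∫⁻ y, ‖v' y‖ₑ with hK
  set L := ∫⁻ y, ‖v y‖ₑ with hL
  have hLfin : L ≠ ⊤ := hi.2.ne
  have hswap : ∀ᵐ x, ∀ᵐ h, 0 ≤ h → ‖v x‖ₑ ≤ ‖v (x + h)‖ₑ + K := by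
    refine (Measure.ae_ae_comm ?_).mp (Filter.Eventually.of_forall fun h => ?_)
    · have : {x : ℝ × ℝ | 0 ≤ x.1 → ‖v x.2‖ₑ ≤ ‖v (x.2 + x.1)‖ₑ + K} =
          {x : ℝ × ℝ | 0 ≤ x.1}ᶜ ∪ {x : ℝ × ℝ | ‖v x.2‖ₑ ≤ ‖v (x.2 + x.1)‖ₑ + K} := by
        ext x; simp only [Set.mem_ofPred_eq, Set.mem_union, Set.mem_compl_iff]; tauto
      rw [this]
      exact (measurableSet_le measurable_const measurable_fst).compl.union
        (measurableSet_le (by fun_prop) (by fun_prop))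
    · by_cases hh : 0 ≤ h
      · filter_upwards [hv.translate_sub_ae_eq hi hi' hm' hh] with x hx _
        have h1 : ‖∫ τ in (0 : ℝ)..h, v' (x + τ)‖ₑ ≤ K := by
          rw [intervalIntegral.integral_of_le hh]
          refine (enorm_integral_le_lintegral_enorm _).trans ?_
          refine (setLIntegral_le_lintegral _ _).trans ?_
          rw [lintegral_add_left_eq_self (fun x => ‖v' x‖ₑ)]
        rw [show v x = v (x + h) - ∫ τ in (0 : ℝ)..h, v' (x + τ) by rw [← hx]; ring]
        exact enorm_sub_le.trans (add_le_add_right h1 _)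
      · exact Filter.Eventually.of_forall fun x h0 => absurd h0 hh
  filter_upwards [hswap] with x hx
  have hN : ∀ N : ℕ, (N : ENNReal) * ‖v x‖ₑ ≤ L + N * K := by
    intro N
    have hvol : volume (Set.Ioc (0 : ℝ) N) = N := by simp
    calc (N : ENNReal) * ‖v x‖ₑ = ∫⁻ _ in Set.Ioc (0 : ℝ) N, ‖v x‖ₑ := by
          rw [setLIntegral_const, hvol, mul_comm]
      _ ≤ ∫⁻ h in Set.Ioc (0 : ℝ) N, (‖v (x + h)‖ₑ + K) := by
          refine setLIntegral_mono_ae' measurableSet_Ioc ?_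
          filter_upwards [hx] with h hh hmem using hh hmem.1.le
      _ = (∫⁻ h in Set.Ioc (0 : ℝ) N, ‖v (x + h)‖ₑ) + N * K := by
          rw [lintegral_add_right _ measurable_const, setLIntegral_const, hvol, mul_comm K]
      _ ≤ L + N * K := by
          gcongr
          refine (setLIntegral_le_lintegral _ _).trans ?_
          rw [lintegral_add_left_eq_self (fun x => ‖v x‖ₑ)]
  have hKfin : K ≠ ⊤ := hi'.2.ne
  have hx' : ∀ N : ℕ, (N : ℝ) * (‖v x‖ - K.toReal) ≤ L.toReal := by
    intro N
    have := ENNReal.toReal_mono (by finiteness) (hN N)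
    rw [ENNReal.toReal_add hLfin (by finiteness)] at this
    simp only [ENNReal.toReal_mul, ENNReal.toReal_natCast, toReal_enorm] at this
    linarith
  have hreal : ‖v x‖ ≤ K.toReal := by
    by_contra! hlt
    obtain ⟨N, hN⟩ := Archimedean.arch (L.toReal + 1) (sub_pos.mpr hlt)
    have := hx' N
    rw [nsmul_eq_mul] at hN
    linarith
  rw [← ofReal_norm]
  exact ENNReal.ofReal_le_of_le_toReal hreal

/-- Multiplication by the coordinate and the weak product rule. -/
lemma HasWeakDeriv.ofReal_mul {v v' : ℝ → ℂ} (hv : HasWeakDeriv v v') :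
    HasWeakDeriv (fun x => Complex.ofReal x * v x)
      (fun x => v x + Complex.ofReal x * v' x) := by
  have hmul : ∀ {u : ℝ → ℂ}, LocallyIntegrable u →
      LocallyIntegrable (fun x => Complex.ofReal x * u x) := fun hu =>
    hu.continuous_smul (g := fun x : ℝ => (x : ℂ)) (by fun_prop)
  refine ⟨hmul hv.1, hv.1.add (hmul hv.2.1), fun φ hφ hc => ?_⟩
  have hint : ∀ {u : ℝ → ℂ} {ψ : ℝ → ℝ}, LocallyIntegrable u → Continuous ψ →
      HasCompactSupport ψ → Integrable (fun x => (ψ x : ℂ) * u x) := by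
    intro u ψ hu hψ hψc
    simpa using hu.integrable_smul_left_of_hasCompactSupport hψ hψc
  have hφd := hφ.continuous_deriv (by simp)
  have hw := hv.2.2 (fun x => x * φ x) (by fun_prop) (hc.mul_left)
  have hderiv : ∀ x, deriv (fun x => x * φ x) x = φ x + deriv φ x * x := fun x => by
    rw [deriv_fun_mul differentiableAt_fun_id (hφ.differentiable (by simp) x)]
    simp [mul_comm]
  have i1 := hint hv.1 hφ.continuous hc
  have i2 := hint (hmul hv.1) hφd hc.deriv
  have i3 := hint (hmul hv.2.1) hφ.continuous hc
  have e1 : ∫ x, ((deriv (fun x => x * φ x) x : ℝ) : ℂ) * v x =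
      (∫ x, (φ x : ℂ) * v x) + ∫ x, ((deriv φ x : ℝ) : ℂ) * (x * v x) := by
    rw [← integral_add i1 i2]
    congr 1; funext x
    rw [hderiv]; push_cast; ring
  have e2 : ∫ x, (φ x : ℂ) * (v x + x * v' x) =
      (∫ x, (φ x : ℂ) * v x) + ∫ x, ((x * φ x : ℝ) : ℂ) * v' x := by
    simp only [mul_add]
    rw [integral_add i1 i3]
    congr 2; funext x
    push_cast; ring
  rw [e2]
  linear_combination hw - e1

lemma norm_expc (x y : ℝ) : ‖expc x y‖ = Real.exp x := by
  simp [expc, Complex.norm_exp]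

lemma enorm_expc_zero_left (y : ℝ) : ‖expc 0 y‖ₑ = 1 := by
  rw [← ofReal_norm, norm_expc]; simp

lemma expc_eq_ofReal_exp_mul (x y : ℝ) : expc x y = (Real.exp x : ℂ) * expc 0 y := by
  simp [expc, Complex.exp_add]

lemma measurable_expc_zero : Measurable (expc 0) := by
  unfold expc; fun_prop

lemma expc_zero_add_half_period {c : ℝ} (hc : c ≠ 0) (ξ : ℝ) :
    expc 0 (c * (ξ + π / |c|)) = -expc 0 (c * ξ) := by
  have h1 : c * (π / |c|) = π ∨ c * (π / |c|) = -π := by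
    rcases abs_cases c with ⟨h, _⟩ | ⟨h, _⟩ <;> rw [h]
    · left; field_simp
    · right; field_simp
  unfold expc
  rw [mul_add]
  rcases h1 with h | h <;> rw [h]
  · simp [add_mul, Complex.exp_add, Complex.exp_pi_mul_I]
  · simp [add_mul, Complex.exp_add, Complex.exp_neg, Complex.exp_pi_mul_I]

lemma enorm_integral_expc_mul_le (c k : ℝ) (w g : ℝ → ℂ) :
    ‖∫ ξ, expc 0 (c * ξ) * (w (k - ξ) * g ξ)‖ₑ ≤ ∫⁻ ξ, ‖w (k - ξ)‖ₑ * ‖g ξ‖ₑ := by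
  refine (enorm_integral_le_lintegral_enorm _).trans (le_of_eq ?_)
  simp [enorm_mul, enorm_expc_zero_left]

/-- Young's inequality `L¹ * L¹ → L¹` for the oscillatory convolution. -/
lemma lintegral_oscillatory_convolution_le (c : ℝ) {w g : ℝ → ℂ} (hw : Measurable w)
    (hg : Measurable g) :
    ∫⁻ k, ‖∫ ξ, expc 0 (c * ξ) * (w (k - ξ) * g ξ)‖ₑ ≤ (∫⁻ x, ‖w x‖ₑ) * ∫⁻ x, ‖g x‖ₑ := by
  calc _ ≤ ∫⁻ k, ∫⁻ ξ, ‖w (k - ξ)‖ₑ * ‖g ξ‖ₑ :=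
        lintegral_mono fun k => enorm_integral_expc_mul_le c k w g
    _ = ∫⁻ ξ, ∫⁻ k, ‖w (k - ξ)‖ₑ * ‖g ξ‖ₑ :=
        lintegral_lintegral_swap (by unfold Function.uncurry; fun_prop)
    _ = ∫⁻ ξ, (∫⁻ x, ‖w x‖ₑ) * ‖g ξ‖ₑ := by
        congr 1; funext ξ
        rw [lintegral_mul_const _ (by fun_prop), lintegral_sub_right_eq_self (fun x => ‖w x‖ₑ)]
    _ = _ := lintegral_const_mul _ (by fun_prop)

/-- Pointwise bound of the convolution by essential boundedness of the first factor. -/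
lemma lintegral_convolution_le_of_ae_le {u g : ℝ → ℂ} {K : ENNReal} (hg : Measurable g)
    (hu : ∀ᵐ x, ‖u x‖ₑ ≤ K) (k : ℝ) :
    ∫⁻ ξ, ‖u (k - ξ)‖ₑ * ‖g ξ‖ₑ ≤ K * ∫⁻ x, ‖g x‖ₑ := by
  rw [← lintegral_const_mul _ (by fun_prop)]
  refine lintegral_mono_ae ?_
  filter_upwards [(quasiMeasurePreserving_sub_left volume k).ae hu] with ξ hξ
  gcongr

/-- Exchanging the roles of the two factors of a convolution. -/
lemma lintegral_convolution_comm (u g : ℝ → ℂ) (k : ℝ) :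
    ∫⁻ ξ, ‖u (k - ξ)‖ₑ * ‖g ξ‖ₑ = ∫⁻ ξ, ‖g (k - ξ)‖ₑ * ‖u ξ‖ₑ := by
  rw [← lintegral_sub_left_eq_self (fun ξ => ‖u (k - ξ)‖ₑ * ‖g ξ‖ₑ) k]
  simp [mul_comm]

/-- Pointwise decay of an oscillatory convolution: the phase gains a factor `π / |c|` at the price
of one derivative on either factor. -/
lemma enorm_oscillatory_convolution_le {c : ℝ} (hc : c ≠ 0) {w w' g g' : ℝ → ℂ}
    (hw : HasWeakDeriv w w') (hg : HasWeakDeriv g g')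
    (hwm : Measurable w) (hwm' : Measurable w') (hgm : Measurable g) (hgm' : Measurable g')
    (hwi : Integrable w) (hwi' : Integrable w') (hgi : Integrable g) (hgi' : Integrable g')
    (k : ℝ) :
    ‖∫ ξ, expc 0 (c * ξ) * (w (k - ξ) * g ξ)‖ₑ ≤
      ENNReal.ofReal (π / |c|) * ((∫⁻ x, ‖w' x‖ₑ) * ∫⁻ x, ‖g' x‖ₑ) := by
  set h := π / |c| with hh
  have hpos : 0 ≤ h := by positivity
  set K := ∫⁻ x, ‖w' x‖ₑ with hK
  set G := ∫⁻ x, ‖g' x‖ₑ with hG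
  have hem := measurable_expc_zero
  have hwb := hw.ae_enorm_le hwi hwi' hwm hwm'
  have hgb := hg.ae_enorm_le hgi hgi' hgm hgm'
  set f : ℝ → ℂ := fun ξ => expc 0 (c * ξ) * (w (k - ξ) * g ξ) with hf
  have hfi : Integrable f := by
    refine ⟨(by fun_prop : Measurable f).aestronglyMeasurable, ?_⟩
    have : ∫⁻ ξ, ‖f ξ‖ₑ ≤ K * ∫⁻ x, ‖g x‖ₑ := by
      simpa [hf, enorm_mul, enorm_expc_zero_left] using lintegral_convolution_le_of_ae_le hgm hwb k
    exact this.trans_lt (ENNReal.mul_lt_top hwi'.2 hgi.2)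
  have hshift : ∫ ξ, f (ξ + h) = ∫ ξ, f ξ := integral_add_right_eq_self f h
  have hsplit : ∀ ξ, f ξ + f (ξ + h) = expc 0 (c * ξ) *
      ((w ((k - h) - ξ + h) - w ((k - h) - ξ)) * g ξ -
        w ((k - h) - ξ) * (g (ξ + h) - g ξ)) := by
    intro ξ
    simp only [hf, hh, expc_zero_add_half_period hc]
    rw [show k - π / |c| - ξ + π / |c| = k - ξ by ring,
      show k - (ξ + π / |c|) = k - π / |c| - ξ by ring]
    ring
  have htwo : 2 * ∫ ξ, f ξ = ∫ ξ, (f ξ + f (ξ + h)) := by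
    rw [integral_add hfi (hfi.comp_add_right h), hshift, two_mul]
  have hbound : 2 * ‖∫ ξ, f ξ‖ₑ ≤ 2 * (ENNReal.ofReal h * (K * G)) := by
    have h2 : (2 : ENNReal) = ‖(2 : ℂ)‖ₑ := by
      rw [← ofReal_norm]; simp
    calc 2 * ‖∫ ξ, f ξ‖ₑ = ‖∫ ξ, (f ξ + f (ξ + h))‖ₑ := by
          rw [← htwo, enorm_mul, ← h2]
      _ ≤ ∫⁻ ξ, ‖f ξ + f (ξ + h)‖ₑ := enorm_integral_le_lintegral_enorm _
      _ ≤ ∫⁻ ξ, (‖w ((k - h) - ξ + h) - w ((k - h) - ξ)‖ₑ * ‖g ξ‖ₑ +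
            ‖w ((k - h) - ξ)‖ₑ * ‖g (ξ + h) - g ξ‖ₑ) := by
          refine lintegral_mono fun ξ => ?_
          simp only [hsplit]
          rw [enorm_mul, enorm_expc_zero_left, one_mul]
          refine enorm_sub_le.trans ?_
          rw [enorm_mul, enorm_mul]
      _ = (∫⁻ ξ, ‖w ((k - h) - ξ + h) - w ((k - h) - ξ)‖ₑ * ‖g ξ‖ₑ) +
            ∫⁻ ξ, ‖w ((k - h) - ξ)‖ₑ * ‖g (ξ + h) - g ξ‖ₑ :=
          lintegral_add_left (by fun_prop) _
      _ ≤ G * (ENNReal.ofReal h * K) + K * (ENNReal.ofReal h * G) := by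
          gcongr ?_ + ?_
          · rw [lintegral_convolution_comm (fun x => w (x + h) - w x) g]
            refine (lintegral_convolution_le_of_ae_le (by fun_prop) hgb _).trans ?_
            gcongr
            exact hw.lintegral_translate_sub_le hwi hwi' hwm' hpos
          · refine (lintegral_convolution_le_of_ae_le
              (g := fun ξ => g (ξ + h) - g ξ) (by fun_prop) hwb _).trans ?_
            gcongr
            exact hg.lintegral_translate_sub_le hgi hgi' hgm' hpos
      _ = 2 * (ENNReal.ofReal h * (K * G)) := by ring
  exact (ENNReal.mul_le_mul_iff_right (by simp) (by simp)).mp hbound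

lemma integrable_and_integrable_ofReal_mul_of_weighted {v : ℝ → ℂ} (hm : Measurable v)
    (h : Integrable (fun k => (1 + |k|) * ‖v k‖)) :
    Integrable v ∧ Integrable (fun k => Complex.ofReal k * v k) := by
  refine ⟨h.mono' hm.aestronglyMeasurable (Filter.Eventually.of_forall fun k => ?_),
    h.mono' (by fun_prop) (Filter.Eventually.of_forall fun k => ?_)⟩
  · nlinarith [mul_nonneg (abs_nonneg k) (norm_nonneg (v k))]
  · rw [norm_mul, Complex.norm_real, Real.norm_eq_abs]
    nlinarith [norm_nonneg (v k)]

lemma lintegral_enorm_le_ofReal {v : ℝ → ℂ} (hi : Integrable v) {B : ℝ}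
    (h : ∫ k, ‖v k‖ ≤ B) : ∫⁻ k, ‖v k‖ₑ ≤ ENNReal.ofReal B := by
  rw [← ofReal_integral_norm_eq_lintegral_enorm hi]
  exact ENNReal.ofReal_le_ofReal h

lemma one_add_log_le_rpow {s : ℝ} (hs : 0 ≤ s) :
    1 + Real.log (2 + s) ≤ 6 * (1 + s) ^ ((1 : ℝ) / 4) := by
  have h1 : Real.log (2 + s) ≤ Real.log 2 + Real.log (1 + s) := by
    rw [← Real.log_mul (by norm_num) (by positivity)]
    exact Real.log_le_log (by positivity) (by linarith)
  have h2 : Real.log (1 + s) ≤ (1 + s) ^ ((1 : ℝ) / 4) / (1 / 4) :=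
    Real.log_le_rpow_div (by positivity) (by norm_num)
  have h3 : (1 : ℝ) ≤ (1 + s) ^ ((1 : ℝ) / 4) := Real.one_le_rpow (by linarith) (by norm_num)
  have h4 := Real.log_two_lt_d9
  linarith

/-- The scalar inequality behind the integrable-in-time pointwise bound. -/
lemma min_phase_bound_le {b s : ℝ} (hb : b ≠ 0) (hs : 0 < s) :
    min 1 (π / |b * s| * ((1 + Real.log (2 + s)) * (1 + s) ^ (-(1 : ℝ) / 2))) ≤
      (4 + 12 * π / |b|) * (1 + s) ^ (-(5 : ℝ) / 4) := by
  have hb' : 0 < |b| := abs_pos.mpr hb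
  have hs1 : 0 < 1 + s := by linarith
  rcases le_total s 1 with h | h
  · refine (min_le_left _ _).trans ?_
    have h1 : (1 : ℝ) / 4 ≤ (1 + s) ^ (-(5 : ℝ) / 4) := by
      calc (1 : ℝ) / 4 = (2 : ℝ) ^ (-2 : ℝ) := by
            rw [Real.rpow_neg (by norm_num)]; norm_num
        _ ≤ 2 ^ (-(5 : ℝ) / 4) := Real.rpow_le_rpow_of_exponent_le (by norm_num) (by norm_num)
        _ ≤ (1 + s) ^ (-(5 : ℝ) / 4) :=
            Real.rpow_le_rpow_of_nonpos hs1 (by linarith) (by norm_num)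
    have h2 : 0 ≤ 12 * π / |b| := by positivity
    nlinarith
  · refine (min_le_right _ _).trans ?_
    have h1 : π / |b * s| ≤ 2 * π / |b| * (1 + s) ^ (-1 : ℝ) := by
      rw [abs_mul, abs_of_pos hs, Real.rpow_neg_one, ← div_eq_mul_inv, div_div]
      rw [div_le_div_iff₀ (by positivity) (by positivity)]
      have : 0 < π * |b| := by positivity
      nlinarith
    calc π / |b * s| * ((1 + Real.log (2 + s)) * (1 + s) ^ (-(1 : ℝ) / 2))
        ≤ 2 * π / |b| * (1 + s) ^ (-1 : ℝ) *
          (6 * (1 + s) ^ ((1 : ℝ) / 4) * (1 + s) ^ (-(1 : ℝ) / 2)) := by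
          have := one_add_log_le_rpow hs.le
          have h0 : 0 ≤ 1 + Real.log (2 + s) := by
            have := Real.log_nonneg (show 1 ≤ 2 + s by linarith)
            linarith
          gcongr
      _ = 12 * π / |b| * ((1 + s) ^ (-1 : ℝ) * (1 + s) ^ ((1 : ℝ) / 4) *
            (1 + s) ^ (-(1 : ℝ) / 2)) := by ring
      _ = 12 * π / |b| * (1 + s) ^ (-(5 : ℝ) / 4) := by
          rw [← Real.rpow_add hs1, ← Real.rpow_add hs1]; norm_num
      _ ≤ _ := by
          gcongr
          linarith

/-- Pointwise-in-frequency bound of one time slice. -/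
lemma slice_pointwise_le {b s η : ℝ} (hb : b ≠ 0) (hs : 0 < s) (hη : 0 < η)
    {w w' z z' : ℝ → ℂ} (hwm : Measurable w) (hwm' : Measurable w')
    (hzm : Measurable z) (hzm' : Measurable z')
    (hw : HasWeakDeriv w w') (hz : HasWeakDeriv z z')
    (iw : Integrable (fun k => (1 + |k|) * ‖w k‖))
    (iw' : Integrable (fun k => (1 + |k|) * ‖w' k‖))
    (iz : Integrable (fun k => (1 + |k|) * ‖z k‖))
    (iz' : Integrable (fun k => (1 + |k|) * ‖z' k‖))
    (bz : (∫ k : ℝ, ‖z k‖) ≤ η * (1 + s) ^ (-(1 : ℝ) / 2))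
    (bkz : (∫ k : ℝ, |k| * ‖z k‖) ≤ η * (1 + s) ^ (-(1 : ℝ)))
    (bw' : (∫ k : ℝ, ‖w' k‖) ≤ η)
    (bkz' : (∫ k : ℝ, |k| * ‖z' k‖) ≤ η * Real.log (2 + s) * (1 + s) ^ (-(1 : ℝ) / 2))
    (k : ℝ) :
    ‖∫ ξ, expc 0 (b * s * ξ) * (w (k - ξ) * (Complex.ofReal ξ * z ξ))‖ₑ ≤
      ENNReal.ofReal (η ^ 2 * ((4 + 12 * π / |b|) * (1 + s) ^ (-(5 : ℝ) / 4))) := by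
  have hs1 : 0 < 1 + s := by linarith
  have hlog : 0 ≤ Real.log (2 + s) := Real.log_nonneg (by linarith)
  obtain ⟨jw, -⟩ := integrable_and_integrable_ofReal_mul_of_weighted hwm iw
  obtain ⟨jw', -⟩ := integrable_and_integrable_ofReal_mul_of_weighted hwm' iw'
  obtain ⟨jz, jkz⟩ := integrable_and_integrable_ofReal_mul_of_weighted hzm iz
  obtain ⟨-, jkz'⟩ := integrable_and_integrable_ofReal_mul_of_weighted hzm' iz'
  have nw' := lintegral_enorm_le_ofReal jw' bw'
  have nz := lintegral_enorm_le_ofReal jz bz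
  have nkz : ∫⁻ ξ, ‖Complex.ofReal ξ * z ξ‖ₑ ≤ ENNReal.ofReal η := by
    refine lintegral_enorm_le_ofReal jkz ?_
    simp only [norm_mul, Complex.norm_real, Real.norm_eq_abs]
    refine bkz.trans (mul_le_of_le_one_right hη.le ?_)
    exact Real.rpow_le_one_of_one_le_of_nonpos (by linarith) (by norm_num)
  have nkz' := lintegral_enorm_le_ofReal jkz' (by
    simpa only [norm_mul, Complex.norm_real, Real.norm_eq_abs] using bkz')
  have hdirect : ‖∫ ξ, expc 0 (b * s * ξ) * (w (k - ξ) * (Complex.ofReal ξ * z ξ))‖ₑ ≤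
      ENNReal.ofReal (η ^ 2 * 1) := by
    refine (enorm_integral_expc_mul_le _ k w (fun ξ => Complex.ofReal ξ * z ξ)).trans ?_
    refine (lintegral_convolution_le_of_ae_le (g := fun ξ => Complex.ofReal ξ * z ξ)
      (by fun_prop) (hw.ae_enorm_le jw jw' hwm hwm') k).trans ?_
    rw [mul_one, pow_two, ENNReal.ofReal_mul hη.le]
    gcongr
  have hphase : ‖∫ ξ, expc 0 (b * s * ξ) * (w (k - ξ) * (Complex.ofReal ξ * z ξ))‖ₑ ≤
      ENNReal.ofReal (η ^ 2 * (π / |b * s| *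
        ((1 + Real.log (2 + s)) * (1 + s) ^ (-(1 : ℝ) / 2)))) := by
    refine (enorm_oscillatory_convolution_le (mul_ne_zero hb hs.ne') hw hz.ofReal_mul hwm hwm'
      (by fun_prop) (by fun_prop) jw jw' jkz (jz.add jkz') k).trans ?_
    have ng' : ∫⁻ x, ‖z x + Complex.ofReal x * z' x‖ₑ ≤ ENNReal.ofReal
        (η * ((1 + Real.log (2 + s)) * (1 + s) ^ (-(1 : ℝ) / 2))) := by
      calc _ ≤ ∫⁻ x, (‖z x‖ₑ + ‖Complex.ofReal x * z' x‖ₑ) :=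
            lintegral_mono fun x => enorm_add_le _ _
        _ = (∫⁻ x, ‖z x‖ₑ) + ∫⁻ x, ‖Complex.ofReal x * z' x‖ₑ :=
            lintegral_add_left (by fun_prop) _
        _ ≤ _ := add_le_add nz nkz'
        _ = _ := by
            rw [← ENNReal.ofReal_add (by positivity) (by positivity)]
            congr 1; ring
    calc _ ≤ ENNReal.ofReal (π / |b * s|) * (ENNReal.ofReal η * ENNReal.ofReal
          (η * ((1 + Real.log (2 + s)) * (1 + s) ^ (-(1 : ℝ) / 2)))) := by gcongr
      _ = _ := by
          rw [← ENNReal.ofReal_mul hη.le, ← ENNReal.ofReal_mul (by positivity)]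
          congr 1; ring
  refine (le_min hdirect hphase).trans ?_
  rw [← ENNReal.ofReal_min, ← mul_min_of_nonneg _ _ (by positivity)]
  have := min_phase_bound_le hb hs
  gcongr

/-- `L¹`-in-frequency bound of one time slice. -/
lemma slice_lintegral_le {b s η : ℝ} (hs : 0 ≤ s) (hη : 0 < η)
    {w z : ℝ → ℂ} (hwm : Measurable w) (hzm : Measurable z)
    (iw : Integrable (fun k => (1 + |k|) * ‖w k‖))
    (iz : Integrable (fun k => (1 + |k|) * ‖z k‖))
    (bw : (∫ k : ℝ, ‖w k‖) ≤ η * (1 + s) ^ (-(1 : ℝ) / 2))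
    (bkz : (∫ k : ℝ, |k| * ‖z k‖) ≤ η * (1 + s) ^ (-(1 : ℝ))) :
    ∫⁻ k, ‖∫ ξ, expc 0 (b * s * ξ) * (w (k - ξ) * (Complex.ofReal ξ * z ξ))‖ₑ ≤
      ENNReal.ofReal (η ^ 2 * (1 + s) ^ (-(3 : ℝ) / 2)) := by
  have hs1 : 0 < 1 + s := by linarith
  obtain ⟨jw, -⟩ := integrable_and_integrable_ofReal_mul_of_weighted hwm iw
  obtain ⟨-, jkz⟩ := integrable_and_integrable_ofReal_mul_of_weighted hzm iz
  have nw := lintegral_enorm_le_ofReal jw bw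
  have nkz := lintegral_enorm_le_ofReal jkz (by
    simpa only [norm_mul, Complex.norm_real, Real.norm_eq_abs] using bkz)
  refine (lintegral_oscillatory_convolution_le (b * s) hwm
    (g := fun ξ => Complex.ofReal ξ * z ξ) (by fun_prop)).trans ?_
  refine (mul_le_mul' nw nkz).trans (le_of_eq ?_)
  rw [← ENNReal.ofReal_mul (by positivity)]
  congr 1
  rw [show -(3 : ℝ) / 2 = -(1 : ℝ) / 2 + -1 by norm_num, Real.rpow_add hs1]
  ring

/-- Gaussian domination of the weighted heat multiplier. -/
lemma abs_pow_mul_exp_le {m : ℝ} (hm : 0 < m) {a : ℕ} (ha : a ≤ 1) (k : ℝ) :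
    |k| ^ a * Real.exp (-(m * k ^ 2)) ≤
      m ^ (-(a : ℝ) / 2) * Real.exp (-(m / 2) * k ^ 2) := by
  have hsplit : Real.exp (-(m * k ^ 2)) =
      Real.exp (-(m / 2) * k ^ 2) * Real.exp (-(m / 2) * k ^ 2) := by
    rw [← Real.exp_add]; ring_nf
  have hle : Real.exp (-(m / 2) * k ^ 2) ≤ 1 := by
    rw [Real.exp_le_one_iff]; nlinarith [sq_nonneg k]
  have hpos := Real.exp_pos (-(m / 2) * k ^ 2)
  interval_cases a
  · rw [hsplit]
    simp only [pow_zero, one_mul, Nat.cast_zero, neg_zero, zero_div, Real.rpow_zero]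
    exact mul_le_of_le_one_left hpos.le hle
  · have hx : |k| * √m ≤ Real.exp (m / 2 * k ^ 2) := by
      have h1 := Real.add_one_le_exp (m / 2 * k ^ 2)
      have h2 : (|k| * √m) ^ 2 = m * k ^ 2 := by
        rw [mul_pow, sq_abs, Real.sq_sqrt hm.le]; ring
      nlinarith [sq_nonneg (|k| * √m - 1)]
    have hm2 : m ^ (-((1 : ℕ) : ℝ) / 2) = (√m)⁻¹ := by
      rw [Real.sqrt_eq_rpow, ← Real.rpow_neg hm.le]; norm_num
    have hsm : 0 < √m := Real.sqrt_pos.mpr hm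
    have hk : |k| * Real.exp (-(m / 2) * k ^ 2) ≤ (√m)⁻¹ := by
      rw [neg_mul, Real.exp_neg, ← div_eq_mul_inv, div_le_iff₀ (Real.exp_pos _),
        inv_mul_eq_div, le_div_iff₀ hsm]
      exact hx
    rw [hm2, hsplit, pow_one, ← mul_assoc]
    gcongr

lemma lintegral_abs_pow_mul_exp_le {m : ℝ} (hm : 0 < m) {a : ℕ} (ha : a ≤ 1) :
    ∫⁻ k : ℝ, ENNReal.ofReal (|k| ^ a * Real.exp (-(m * k ^ 2))) ≤
      ENNReal.ofReal (√(2 * π) * m ^ (-(1 + (a : ℝ)) / 2)) := by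
  refine (lintegral_mono fun k => ENNReal.ofReal_le_ofReal (abs_pow_mul_exp_le hm ha k)).trans ?_
  rw [← ofReal_integral_eq_lintegral_ofReal
    ((integrable_exp_neg_mul_sq (half_pos hm)).const_mul _)
    (Filter.Eventually.of_forall fun k => by positivity)]
  rw [integral_const_mul, integral_gaussian]
  refine ENNReal.ofReal_le_ofReal (le_of_eq ?_)
  rw [show π / (m / 2) = 2 * π * m⁻¹ by field_simp, Real.sqrt_mul (by positivity),
    Real.sqrt_eq_rpow m⁻¹, Real.inv_rpow hm.le, ← Real.rpow_neg hm.le, mul_comm, mul_assoc,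
    ← Real.rpow_add hm]
  ring_nf

lemma setLIntegral_one_add_rpow_le {t : ℝ} (ht : 0 ≤ t) :
    ∫⁻ s in Set.Ioc 0 t, ENNReal.ofReal ((1 + s) ^ (-(5 : ℝ) / 4)) ≤ ENNReal.ofReal 4 := by
  have hii : IntervalIntegrable (fun s : ℝ => (1 + s) ^ (-(5 : ℝ) / 4)) volume 0 t := by
    refine ContinuousOn.intervalIntegrable fun s hs => ?_
    rw [Set.uIcc_of_le ht] at hs
    exact ContinuousAt.continuousWithinAt
      (ContinuousAt.rpow_const (by fun_prop) (Or.inl (by linarith [hs.1])))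
  rw [← ofReal_integral_eq_lintegral_ofReal ((intervalIntegrable_iff_integrableOn_Ioc_of_le ht).mp
    hii) (ae_restrict_of_forall_mem measurableSet_Ioc fun s hs =>
      Real.rpow_nonneg (by linarith [hs.1]) _), ← intervalIntegral.integral_of_le ht]
  refine ENNReal.ofReal_le_ofReal ?_
  rw [intervalIntegral.integral_comp_add_left (fun x : ℝ => x ^ (-(5 : ℝ) / 4)) 1, integral_rpow]
  · have : 0 ≤ (1 + t) ^ (-(5 : ℝ) / 4 + 1) := by positivity
    rw [div_le_iff_of_neg (by norm_num)]
    simp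
    linarith
  · right
    refine ⟨by norm_num, ?_⟩
    rw [Set.uIcc_of_le (by linarith)]
    intro h; linarith [h.1]

lemma setLIntegral_sub_rpow_le {t : ℝ} (ht : 0 ≤ t) {a : ℕ} (ha : a ≤ 1) :
    ∫⁻ s in Set.Ioc 0 t, ENNReal.ofReal ((t - s) ^ (-(a : ℝ) / 2)) ≤
      ENNReal.ofReal (2 * (1 + t) ^ (1 - (a : ℝ) / 2)) := by
  have ha' : (a : ℝ) ≤ 1 := by exact_mod_cast ha
  have hr : -1 < -(a : ℝ) / 2 := by linarith
  have hii : IntervalIntegrable (fun s : ℝ => (t - s) ^ (-(a : ℝ) / 2)) volume 0 t := by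
    have := (intervalIntegral.intervalIntegrable_rpow' (a := 0) (b := t) hr).comp_sub_left t
    simpa using this.symm
  rw [← ofReal_integral_eq_lintegral_ofReal ((intervalIntegrable_iff_integrableOn_Ioc_of_le ht).mp
    hii) (ae_restrict_of_forall_mem measurableSet_Ioc fun s hs =>
      Real.rpow_nonneg (by linarith [hs.2]) _), ← intervalIntegral.integral_of_le ht]
  refine ENNReal.ofReal_le_ofReal ?_
  rw [intervalIntegral.integral_comp_sub_left (fun x : ℝ => x ^ (-(a : ℝ) / 2)) t,
    integral_rpow (Or.inl hr), sub_self, sub_zero, Real.zero_rpow (by linarith), sub_zero,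
    show -(a : ℝ) / 2 + 1 = 1 - (a : ℝ) / 2 by ring, div_le_iff₀ (by linarith)]
  have h1 : t ^ (1 - (a : ℝ) / 2) ≤ (1 + t) ^ (1 - (a : ℝ) / 2) :=
    Real.rpow_le_rpow ht (by linarith) (by linarith)
  have h2 : 0 ≤ (1 + t) ^ (1 - (a : ℝ) / 2) := by positivity
  nlinarith

/-- Heat smoothing of one time slice: far from the endpoint the pointwise bound is used against the
`L¹` norm of the multiplier, otherwise the `L¹` bound against its supremum. -/
lemma lintegral_heat_mul_slice_le {d M η s t : ℝ} (hd : 0 < d) (hM : 0 ≤ M) (hs : 0 < s)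
    (hst : s < t) {a : ℕ} (ha : a ≤ 1) {J : ℝ → ℂ} (hJ : Measurable J)
    (hsup : ∀ k, ‖J k‖ₑ ≤ ENNReal.ofReal (η ^ 2 * (M * (1 + s) ^ (-(5 : ℝ) / 4))))
    (hL : ∫⁻ k, ‖J k‖ₑ ≤ ENNReal.ofReal (η ^ 2 * (1 + s) ^ (-(3 : ℝ) / 2))) :
    ∫⁻ k, ENNReal.ofReal (|k| ^ a * Real.exp (-(d * k ^ 2 * (t - s)))) * ‖J k‖ₑ ≤
      ENNReal.ofReal (η ^ 2 * (4 * √(2 * π) * d ^ (-(1 + (a : ℝ)) / 2) * M *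
        (1 + t) ^ (-(1 + (a : ℝ)) / 2))) * ENNReal.ofReal ((1 + s) ^ (-(5 : ℝ) / 4)) +
      ENNReal.ofReal (η ^ 2 * (4 * d ^ (-(a : ℝ) / 2) * (1 + t) ^ (-(3 : ℝ) / 2))) *
        ENNReal.ofReal ((t - s) ^ (-(a : ℝ) / 2)) := by
  have hτ : 0 < t - s := sub_pos.mpr hst
  have hm : 0 < d * (t - s) := mul_pos hd hτ
  have ha' : (a : ℝ) ≤ 1 := by exact_mod_cast ha
  have ht1 : 0 < 1 + t := by linarith
  have hs1 : 0 < 1 + s := by linarith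
  simp only [show ∀ k : ℝ, d * k ^ 2 * (t - s) = d * (t - s) * k ^ 2 from fun k => by ring]
  by_cases hcase : 2 * s < t ∧ 1 ≤ t
  · refine le_add_right ?_
    calc _ ≤ ∫⁻ k, ENNReal.ofReal (|k| ^ a * Real.exp (-(d * (t - s) * k ^ 2))) *
            ENNReal.ofReal (η ^ 2 * (M * (1 + s) ^ (-(5 : ℝ) / 4))) := by
          gcongr with k
          exact hsup k
      _ ≤ ENNReal.ofReal (√(2 * π) * (d * (t - s)) ^ (-(1 + (a : ℝ)) / 2)) *
            ENNReal.ofReal (η ^ 2 * (M * (1 + s) ^ (-(5 : ℝ) / 4))) := by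
          rw [lintegral_mul_const _ (by fun_prop)]
          gcongr
          exact lintegral_abs_pow_mul_exp_le hm ha
      _ ≤ _ := by
          rw [← ENNReal.ofReal_mul (by positivity), ← ENNReal.ofReal_mul (by positivity)]
          refine ENNReal.ofReal_le_ofReal ?_
          have h4 : ((1 : ℝ) / 4) ^ (-(1 + (a : ℝ)) / 2) ≤ 4 := by
            calc ((1 : ℝ) / 4) ^ (-(1 + (a : ℝ)) / 2) ≤ ((1 : ℝ) / 4) ^ (-1 : ℝ) :=
                  Real.rpow_le_rpow_of_exponent_ge (by norm_num) (by norm_num) (by linarith)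
              _ = 4 := by rw [Real.rpow_neg_one]; norm_num
          have hdecay : (t - s) ^ (-(1 + (a : ℝ)) / 2) ≤ 4 * (1 + t) ^ (-(1 + (a : ℝ)) / 2) := by
            calc (t - s) ^ (-(1 + (a : ℝ)) / 2)
                ≤ (1 / 4 * (1 + t)) ^ (-(1 + (a : ℝ)) / 2) :=
                  Real.rpow_le_rpow_of_nonpos (by positivity) (by linarith [hcase.1, hcase.2])
                    (by linarith [(Nat.cast_nonneg a : (0 : ℝ) ≤ a)])
              _ = (1 / 4) ^ (-(1 + (a : ℝ)) / 2) * (1 + t) ^ (-(1 + (a : ℝ)) / 2) :=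
                  Real.mul_rpow (by norm_num) ht1.le
              _ ≤ _ := by gcongr
          rw [Real.mul_rpow hd.le hτ.le]
          calc _ ≤ √(2 * π) * (d ^ (-(1 + (a : ℝ)) / 2) *
                (4 * (1 + t) ^ (-(1 + (a : ℝ)) / 2))) *
                (η ^ 2 * (M * (1 + s) ^ (-(5 : ℝ) / 4))) := by gcongr
            _ = _ := by ring
  · refine le_add_left ?_
    have hhalf : 1 / 2 * (1 + t) ≤ 1 + s := by
      by_contra! hlt
      exact hcase ⟨by linarith, by linarith⟩
    calc _ ≤ ∫⁻ k, ENNReal.ofReal ((d * (t - s)) ^ (-(a : ℝ) / 2)) * ‖J k‖ₑ := by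
          gcongr with k
          refine (abs_pow_mul_exp_le hm ha k).trans (mul_le_of_le_one_right (by positivity) ?_)
          rw [Real.exp_le_one_iff]
          nlinarith [sq_nonneg k]
      _ ≤ ENNReal.ofReal ((d * (t - s)) ^ (-(a : ℝ) / 2)) *
            ENNReal.ofReal (η ^ 2 * (1 + s) ^ (-(3 : ℝ) / 2)) := by
          rw [lintegral_const_mul _ (by fun_prop)]
          gcongr
      _ ≤ _ := by
          rw [← ENNReal.ofReal_mul (by positivity), ← ENNReal.ofReal_mul (by positivity)]
          refine ENNReal.ofReal_le_ofReal ?_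
          have h4 : ((1 : ℝ) / 2) ^ (-(3 : ℝ) / 2) ≤ 4 := by
            calc ((1 : ℝ) / 2) ^ (-(3 : ℝ) / 2) ≤ ((1 : ℝ) / 2) ^ (-2 : ℝ) :=
                  Real.rpow_le_rpow_of_exponent_ge (by norm_num) (by norm_num) (by norm_num)
              _ = 4 := by rw [Real.rpow_neg (by norm_num)]; norm_num
          have hdecay : (1 + s) ^ (-(3 : ℝ) / 2) ≤ 4 * (1 + t) ^ (-(3 : ℝ) / 2) := by
            calc (1 + s) ^ (-(3 : ℝ) / 2) ≤ (1 / 2 * (1 + t)) ^ (-(3 : ℝ) / 2) :=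
                  Real.rpow_le_rpow_of_nonpos (by positivity) hhalf (by norm_num)
              _ = (1 / 2) ^ (-(3 : ℝ) / 2) * (1 + t) ^ (-(3 : ℝ) / 2) :=
                  Real.mul_rpow (by norm_num) ht1.le
              _ ≤ _ := by gcongr
          rw [Real.mul_rpow hd.le hτ.le]
          calc _ ≤ d ^ (-(a : ℝ) / 2) * (t - s) ^ (-(a : ℝ) / 2) *
                (η ^ 2 * (4 * (1 + t) ^ (-(3 : ℝ) / 2))) := by gcongr
            _ = _ := by ring

/-- Integrating the slice bounds in time. -/
lemma integral_duhamel_le {d M η t : ℝ} (hd : 0 < d) (hM : 0 ≤ M) (ht : 0 ≤ t)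
    {a : ℕ} (ha : a ≤ 1) {J : ℝ → ℝ → ℂ} (hJ : Measurable (Function.uncurry J))
    (hsup : ∀ s ∈ Set.Ioo 0 t, ∀ k,
      ‖J s k‖ₑ ≤ ENNReal.ofReal (η ^ 2 * (M * (1 + s) ^ (-(5 : ℝ) / 4))))
    (hL : ∀ s ∈ Set.Ioo 0 t,
      ∫⁻ k, ‖J s k‖ₑ ≤ ENNReal.ofReal (η ^ 2 * (1 + s) ^ (-(3 : ℝ) / 2))) :
    ∫ k : ℝ, |k| ^ a * ‖∫ s in (0 : ℝ)..t, (Real.exp (-(d * k ^ 2 * (t - s))) : ℂ) * J s k‖ ≤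
      (16 * √(2 * π) * d ^ (-(1 + (a : ℝ)) / 2) * M + 8 * d ^ (-(a : ℝ) / 2)) * η ^ 2 *
        (1 + t) ^ (-(1 + (a : ℝ)) / 2) := by
  have ht1 : 0 < 1 + t := by linarith
  have hJ2 : Measurable fun p : ℝ × ℝ => J p.2 p.1 := hJ.comp measurable_swap
  have hbound : ‖∫ k : ℝ, |k| ^ a *
      ‖∫ s in (0 : ℝ)..t, (Real.exp (-(d * k ^ 2 * (t - s))) : ℂ) * J s k‖‖ₑ ≤
      ENNReal.ofReal ((16 * √(2 * π) * d ^ (-(1 + (a : ℝ)) / 2) * M + 8 * d ^ (-(a : ℝ) / 2)) *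
        η ^ 2 * (1 + t) ^ (-(1 + (a : ℝ)) / 2)) := by
    calc _ ≤ ∫⁻ k : ℝ, ∫⁻ s in Set.Ioc 0 t,
          ENNReal.ofReal (|k| ^ a * Real.exp (-(d * k ^ 2 * (t - s)))) * ‖J s k‖ₑ := by
          refine (enorm_integral_le_lintegral_enorm _).trans (lintegral_mono fun k => ?_)
          rw [enorm_mul, enorm_norm, intervalIntegral.integral_of_le ht]
          refine (mul_le_mul_right (enorm_integral_le_lintegral_enorm _) _).trans (le_of_eq ?_)
          rw [← lintegral_const_mul' _ _ (by simp)]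
          congr 1; funext s
          rw [enorm_mul, ← mul_assoc, ENNReal.ofReal_mul (by positivity),
            Real.enorm_of_nonneg (by positivity), ← ofReal_norm (Complex.ofReal _),
            Complex.norm_real, Real.norm_of_nonneg (Real.exp_pos _).le]
      _ = ∫⁻ s in Set.Ioc 0 t, ∫⁻ k : ℝ,
          ENNReal.ofReal (|k| ^ a * Real.exp (-(d * k ^ 2 * (t - s)))) * ‖J s k‖ₑ := by
          refine lintegral_lintegral_swap (Measurable.aemeasurable ?_)
          unfold Function.uncurry
          fun_prop
      _ ≤ ∫⁻ s in Set.Ioc 0 t,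
          (ENNReal.ofReal (η ^ 2 * (4 * √(2 * π) * d ^ (-(1 + (a : ℝ)) / 2) * M *
            (1 + t) ^ (-(1 + (a : ℝ)) / 2))) * ENNReal.ofReal ((1 + s) ^ (-(5 : ℝ) / 4)) +
          ENNReal.ofReal (η ^ 2 * (4 * d ^ (-(a : ℝ) / 2) * (1 + t) ^ (-(3 : ℝ) / 2))) *
            ENNReal.ofReal ((t - s) ^ (-(a : ℝ) / 2))) := by
          refine setLIntegral_mono_ae' measurableSet_Ioc ?_
          filter_upwards [Measure.ae_ne volume t] with s hne hs
          have hmem : s ∈ Set.Ioo 0 t := ⟨hs.1, lt_of_le_of_ne hs.2 hne⟩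
          exact lintegral_heat_mul_slice_le hd hM hmem.1 hmem.2 ha
            (hJ.comp measurable_prodMk_left) (hsup s hmem) (hL s hmem)
      _ ≤ ENNReal.ofReal (η ^ 2 * (4 * √(2 * π) * d ^ (-(1 + (a : ℝ)) / 2) * M *
            (1 + t) ^ (-(1 + (a : ℝ)) / 2))) * ENNReal.ofReal 4 +
          ENNReal.ofReal (η ^ 2 * (4 * d ^ (-(a : ℝ) / 2) * (1 + t) ^ (-(3 : ℝ) / 2))) *
            ENNReal.ofReal (2 * (1 + t) ^ (1 - (a : ℝ) / 2)) := by
          rw [lintegral_add_left (by fun_prop), lintegral_const_mul _ (by fun_prop),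
            lintegral_const_mul _ (by fun_prop)]
          gcongr
          · exact setLIntegral_one_add_rpow_le ht
          · exact setLIntegral_sub_rpow_le ht ha
      _ = _ := by
          rw [← ENNReal.ofReal_mul (by positivity), ← ENNReal.ofReal_mul (by positivity),
            ← ENNReal.ofReal_add (by positivity) (by positivity)]
          congr 1
          rw [show -(1 + (a : ℝ)) / 2 = -(3 : ℝ) / 2 + (1 - (a : ℝ) / 2) by ring,
            Real.rpow_add ht1]
          ring
  rw [Real.enorm_of_nonneg (integral_nonneg fun k => by positivity)] at hbound
  exact (ENNReal.ofReal_le_ofReal_iff (by positivity)).mp hbound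

/-- Duhamel contribution of a marginal mixed term `u_j ∂ₓ u_l` between two
components whose velocities differ by `b ≠ 0`: for `a ∈ {0,1}`,
`∫ |k|^a |∫_0^t ∫ e^{-dk²(t-s)+ibξs} w(k-ξ,s) ξ z(ξ,s) dξ ds| dk ≤ C η² (1+t)^{-(1+a)/2}`. -/
theorem marginal_mixed_derivative_term_estimate (d b : ℝ) (hd : 0 < d) (hb : b ≠ 0) :
    ∃ C : ℝ, 1 ≤ C ∧
      ∀ t : ℝ, 0 ≤ t → ∀ η : ℝ, 0 < η → η ≤ 1 →
        ∀ w w' z z' : ℝ → ℝ → ℂ,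
          Measurable (Function.uncurry w) → Measurable (Function.uncurry w') →
          Measurable (Function.uncurry z) → Measurable (Function.uncurry z') →
          (∀ s ∈ Set.Icc (0 : ℝ) t,
            HasWeakDeriv (w s) (w' s) ∧ HasWeakDeriv (z s) (z' s) ∧
            Integrable (fun k => (1 + |k|) * ‖w s k‖) ∧
            Integrable (fun k => (1 + |k|) * ‖w' s k‖) ∧
            Integrable (fun k => (1 + |k|) * ‖z s k‖) ∧
            Integrable (fun k => (1 + |k|) * ‖z' s k‖) ∧
            (∫ k : ℝ, ‖w s k‖) ≤ η * (1 + s) ^ (-(1 : ℝ) / 2) ∧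
            (∫ k : ℝ, ‖z s k‖) ≤ η * (1 + s) ^ (-(1 : ℝ) / 2) ∧
            (∫ k : ℝ, |k| * ‖w s k‖) ≤ η * (1 + s) ^ (-(1 : ℝ)) ∧
            (∫ k : ℝ, |k| * ‖z s k‖) ≤ η * (1 + s) ^ (-(1 : ℝ)) ∧
            (∫ k : ℝ, ‖w' s k‖) ≤ η ∧
            (∫ k : ℝ, ‖z' s k‖) ≤ η ∧
            (∫ k : ℝ, |k| * ‖w' s k‖) ≤ η * Real.log (2 + s) * (1 + s) ^ (-(1 : ℝ) / 2) ∧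
            (∫ k : ℝ, |k| * ‖z' s k‖) ≤ η * Real.log (2 + s) * (1 + s) ^ (-(1 : ℝ) / 2)) →
          ∀ a : ℕ, a ≤ 1 →
            (∫ k : ℝ, |k| ^ a *
                ‖∫ s in (0 : ℝ)..t, ∫ ξ : ℝ,
                    expc (-(d * k ^ 2 * (t - s))) (b * ξ * s) *
                      (w s (k - ξ) * (Complex.ofReal ξ * z s ξ))‖) ≤
              C * η ^ 2 * (1 + t) ^ (-(1 + (a : ℝ)) / 2) := by
  set M : ℝ := 4 + 12 * π / |b| with hMdef
  have hM : 0 ≤ M := by positivity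
  set Ca : ℕ → ℝ := fun a =>
    16 * √(2 * π) * d ^ (-(1 + (a : ℝ)) / 2) * M + 8 * d ^ (-(a : ℝ) / 2) with hCa
  refine ⟨max 1 (max (Ca 0) (Ca 1)), le_max_left _ _, ?_⟩
  intro t ht η hη _ w w' z z' hw hw' hz hz' H a ha
  have hCle : Ca a ≤ max 1 (max (Ca 0) (Ca 1)) := by
    interval_cases a <;> simp
  have hem := measurable_expc_zero
  have hmeas : Measurable (Function.uncurry fun s k : ℝ =>
      ∫ ξ, expc 0 (b * s * ξ) * (w s (k - ξ) * (Complex.ofReal ξ * z s ξ))) := by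
    refine (StronglyMeasurable.integral_prod_right (f := fun (p : ℝ × ℝ) (ξ : ℝ) =>
      expc 0 (b * p.1 * ξ) * (w p.1 (p.2 - ξ) * (Complex.ofReal ξ * z p.1 ξ)))
      (Measurable.stronglyMeasurable ?_)).measurable
    have h1 : Measurable fun q : (ℝ × ℝ) × ℝ => w q.1.1 (q.1.2 - q.2) :=
      hw.comp (by fun_prop : Measurable fun q : (ℝ × ℝ) × ℝ => (q.1.1, q.1.2 - q.2))
    have h2 : Measurable fun q : (ℝ × ℝ) × ℝ => z q.1.1 q.2 :=
      hz.comp (by fun_prop : Measurable fun q : (ℝ × ℝ) × ℝ => (q.1.1, q.2))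
    unfold Function.uncurry
    fun_prop
  have key := integral_duhamel_le (η := η) hd hM ht ha hmeas ?_ ?_
  · calc _ = ∫ k : ℝ, |k| ^ a * ‖∫ s in (0 : ℝ)..t, (Real.exp (-(d * k ^ 2 * (t - s))) : ℂ) *
          ∫ ξ, expc 0 (b * s * ξ) * (w s (k - ξ) * (Complex.ofReal ξ * z s ξ))‖ := by
          simp only [← integral_const_mul, ← mul_assoc, ← expc_eq_ofReal_exp_mul,
            mul_right_comm b]
      _ ≤ Ca a * η ^ 2 * (1 + t) ^ (-(1 + (a : ℝ)) / 2) := key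
      _ ≤ _ := by gcongr
  · intro s hs k
    obtain ⟨dw, dz, iw, iw', iz, iz', -, bz, -, bkz, bw', -, -, bkz'⟩ :=
      H s (Set.Ioo_subset_Icc_self hs)
    exact slice_pointwise_le hb hs.1 hη (hw.comp measurable_prodMk_left)
      (hw'.comp measurable_prodMk_left) (hz.comp measurable_prodMk_left)
      (hz'.comp measurable_prodMk_left) dw dz iw iw' iz iz' bz bkz bw' bkz' k
  · intro s hs
    obtain ⟨-, -, iw, -, iz, -, bw, -, -, bkz, -⟩ := H s (Set.Ioo_subset_Icc_self hs)
    exact slice_lintegral_le hs.1.le hη (hw.comp measurable_prodMk_left)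
      (hz.comp measurable_prodMk_left) iw iz bw bkz
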